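/- Let (X, T) be a dynamical system. If the induced hyperspace system (K(X), T_K) is uniformly rigid, then the Zadeh extension system (𝔽₀(X), T_F) with the levelwise metric d_∞ is uniformly rigid. -/

import Mathlib

open Metric Set TopologicalSpace Filter Function
open scoped Classical

variable {X Y : Type*}

/-- Extended Hausdorff metric on subsets of `X`: the usual Hausdorff distance between
two nonempty sets (or two empty sets), and `diam X` when exactly one of them is empty. -/
noncomputable def eHd (X : Type*) [MetricSpace X] (A B : Set X) : ℝ :=
  if (A.Nonempty ∧ B.Nonempty) ∨ (A = ∅ ∧ B = ∅) then Metric.hausdorffDist A B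
  else Metric.diam (Set.univ : Set X)

/-- The `α`-cut of a fuzzy set. -/
def cut (A : X → ℝ) (α : ℝ) : Set X := {x | α ≤ A x}

/-- The levelwise metric `d_∞` on fuzzy sets. -/
noncomputable def dinf [MetricSpace X] (A B : X → ℝ) : ℝ :=
  sSup {r : ℝ | ∃ α ∈ Set.Ioc (0:ℝ) 1, r = eHd X (cut A α) (cut B α)}

/-- A fuzzy set: an upper semicontinuous function into `[0,1]`. -/
def IsFuzzy [TopologicalSpace X] (A : X → ℝ) : Prop :=
  (∀ x, A x ∈ Set.Icc (0:ℝ) 1) ∧ UpperSemicontinuous A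

/-- `𝔽₀(X)`: nonempty (not identically zero) u.s.c. fuzzy sets. -/
def F0 (X : Type*) [TopologicalSpace X] : Set (X → ℝ) :=
  {A | IsFuzzy A ∧ ∃ x, A x ≠ 0}

/-- `𝔽^{=λ}(X)`: u.s.c. fuzzy sets with maximum value `λ`. -/
def Feq (X : Type*) [TopologicalSpace X] (lam : ℝ) : Set (X → ℝ) :=
  {A | IsFuzzy A ∧ (∃ x, A x = lam) ∧ ∀ x, A x ≤ lam}

/-- `𝔽^{≥λ}(X)`: u.s.c. fuzzy sets attaining a value `≥ λ`. -/
def Fge (X : Type*) [TopologicalSpace X] (lam : ℝ) : Set (X → ℝ) :=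
  {A | IsFuzzy A ∧ ∃ x, lam ≤ A x}

/-- Zadeh's extension of `T`. -/
noncomputable def zadeh (T : X → X) (A : X → ℝ) : X → ℝ :=
  fun x => sSup (A '' (T ⁻¹' {x}))

/-- The induced map `T_K` on the hyperspace of nonempty closed (= compact) subsets. -/
def hyper [TopologicalSpace X] (T : X → X) (hT : Continuous T)
    (A : NonemptyCompacts X) : NonemptyCompacts X :=
  ⟨⟨T '' A, A.isCompact.image hT⟩, A.nonempty.image T⟩

/-- Topological transitivity. -/
def TopTrans [TopologicalSpace Y] (S : Y → Y) : Prop :=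
  ∀ U V : Set Y, IsOpen U → IsOpen V → U.Nonempty → V.Nonempty →
    ∃ n : ℕ, (S^[n] '' U ∩ V).Nonempty

/-- Weak mixing: `S × S` is transitive. -/
def TopWeakMix [TopologicalSpace Y] (S : Y → Y) : Prop :=
  TopTrans (fun p : Y × Y => (S p.1, S p.2))

/-- Topological transitivity of `S` restricted to `C`, for the topology induced by the
(pseudo)metric `ρ`, phrased via metric balls. -/
def TransOn (ρ : Y → Y → ℝ) (S : Y → Y) (C : Set Y) : Prop :=
  ∀ A ∈ C, ∀ B ∈ C, ∀ ε > 0, ∃ n : ℕ, ∃ E ∈ C, ρ E A < ε ∧ ρ (S^[n] E) B < ε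

/-- Weak mixing of `S` restricted to `C`, phrased via metric balls. -/
def WeakMixOn (ρ : Y → Y → ℝ) (S : Y → Y) (C : Set Y) : Prop :=
  ∀ A₁ ∈ C, ∀ A₂ ∈ C, ∀ B₁ ∈ C, ∀ B₂ ∈ C, ∀ ε > 0, ∃ n : ℕ,
    ∃ E₁ ∈ C, ∃ E₂ ∈ C, ρ E₁ A₁ < ε ∧ ρ E₂ A₂ < ε ∧
      ρ (S^[n] E₁) B₁ < ε ∧ ρ (S^[n] E₂) B₂ < ε


/-- Uniform rigidity of a self-map of a metric space. -/
def UnifRigidM {Z : Type*} [PseudoMetricSpace Z] (S : Z → Z) : Prop :=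
  ∀ ε > 0, ∃ n : ℕ, 1 ≤ n ∧ ∀ y : Z, dist (S^[n] y) y < ε

/-- Uniform rigidity of `S` restricted to `C`, with respect to the metric `ρ`. -/
def UnifRigidOn (ρ : Y → Y → ℝ) (S : Y → Y) (C : Set Y) : Prop :=
  ∀ ε > 0, ∃ n : ℕ, 1 ≤ n ∧ ∀ A ∈ C, ρ (S^[n] A) A < ε

/-!
Each `α`-cut of `zadeh T A` with `0 < α` is the image under `T` of the `α`-cut of `A`, because the
supremum defining `zadeh T A x` is attained as soon as it is positive. Hence `d_∞ (T_Fⁿ A, A)` is a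
supremum of Hausdorff distances between `Tⁿ '' K` and `K`, with `K` running over compact sets, and
a rigidity time of the hyperspace system for `ε / 2` is one of the Zadeh extension for `ε`.
-/

lemma UnifRigidOn.mono {ρ : Y → Y → ℝ} {S : Y → Y} {C D : Set Y} (hD : UnifRigidOn ρ S D)
    (hCD : C ⊆ D) : UnifRigidOn ρ S C := fun ε hε =>
  let ⟨n, hn, hdist⟩ := hD ε hε
  ⟨n, hn, fun A hA => hdist A (hCD hA)⟩

/-- A fuzzy set whose `α`-cuts, `0 < α`, are compact. This is the analogue of `IsFuzzy` on spaces
that need not be compact; the `α`-cuts with `α ≤ 0` are the whole space and are left out. -/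
def IsCompactFuzzy [TopologicalSpace X] (A : X → ℝ) : Prop :=
  (∀ x, A x ∈ Icc (0 : ℝ) 1) ∧ ∀ α > 0, IsCompact (cut A α)

lemma IsFuzzy.isClosed_cut [TopologicalSpace X] {A : X → ℝ} (hA : IsFuzzy A) (α : ℝ) :
    IsClosed (cut A α) :=
  upperSemicontinuous_iff_isClosed_preimage.1 hA.2 α

lemma IsFuzzy.isCompactFuzzy [TopologicalSpace X] [CompactSpace X] {A : X → ℝ}
    (hA : IsFuzzy A) : IsCompactFuzzy A :=
  ⟨hA.1, fun α _ => (hA.isClosed_cut α).isCompact⟩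

lemma le_zadeh {A : X → ℝ} (hA : BddAbove (range A)) (T : X → X) (y : X) :
    A y ≤ zadeh T A (T y) :=
  le_csSup (hA.mono (image_subset_range _ _)) ⟨y, rfl, rfl⟩

lemma zadeh_mem_Icc {A : X → ℝ} (hA : ∀ x, A x ∈ Icc (0 : ℝ) 1) (T : X → X) (x : X) :
    zadeh T A x ∈ Icc (0 : ℝ) 1 :=
  ⟨Real.sSup_nonneg (forall_mem_image.2 fun y _ => (hA y).1),
    Real.sSup_le (forall_mem_image.2 fun y _ => (hA y).2) zero_le_one⟩

namespace IsCompactFuzzy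

variable [TopologicalSpace X] {A : X → ℝ}

lemma bddAbove_range (hA : IsCompactFuzzy A) : BddAbove (range A) :=
  ⟨1, forall_mem_range.2 fun x => (hA.1 x).2⟩

variable [T2Space X]

lemma upperSemicontinuous (hA : IsCompactFuzzy A) : UpperSemicontinuous A := by
  refine upperSemicontinuous_iff_isClosed_preimage.2 fun α => ?_
  rcases le_or_gt α 0 with hα | hα
  · have preimage_eq_univ : A ⁻¹' Ici α = univ :=
      eq_univ_of_forall fun x => hα.trans (hA.1 x).1
    exact preimage_eq_univ ▸ isClosed_univ
  · exact (hA.2 α hα).isClosed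

lemma exists_isMaxOn (hA : IsCompactFuzzy A) {F : Set X} (hF : IsClosed F)
    (hpos : ∃ z ∈ F, 0 < A z) : ∃ y ∈ F, IsMaxOn A F y := by
  obtain ⟨z, hzF, hz⟩ := hpos
  -- Points of `F` outside the compact set `F ∩ cut A (A z)` have a smaller value than `z`.
  have hcompact : IsCompact (F ∩ cut A (A z)) := (hA.2 _ hz).inter_left hF
  have hnonempty : (F ∩ cut A (A z)).Nonempty := ⟨z, hzF, le_refl (A z)⟩
  obtain ⟨y, ⟨hyF, hzy⟩, hmax⟩ :=
    (hA.upperSemicontinuous.upperSemicontinuousOn _).exists_isMaxOn hnonempty hcompact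
  refine ⟨y, hyF, fun w hwF => ?_⟩
  rcases le_total (A z) (A w) with hzw | hwz
  · exact hmax ⟨hwF, hzw⟩
  · exact hwz.trans hzy

variable {T : X → X}

lemma exists_eq_zadeh (hT : Continuous T) (hA : IsCompactFuzzy A) {x : X}
    (hx : 0 < zadeh T A x) : ∃ y, T y = x ∧ A y = zadeh T A x := by
  have hpos : ∃ z ∈ T ⁻¹' {x}, 0 < A z := by
    by_contra! hnonpos
    exact hx.not_ge (Real.sSup_nonpos (forall_mem_image.2 hnonpos))
  obtain ⟨y, hy, hmax⟩ := hA.exists_isMaxOn (isClosed_singleton.preimage hT) hpos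
  have hgreatest : IsGreatest (A '' (T ⁻¹' {x})) (A y) :=
    ⟨mem_image_of_mem A hy, forall_mem_image.2 hmax⟩
  exact ⟨y, hy, hgreatest.csSup_eq.symm⟩

lemma cut_zadeh (hT : Continuous T) (hA : IsCompactFuzzy A) {α : ℝ} (hα : 0 < α) :
    cut (zadeh T A) α = T '' cut A α := by
  refine Subset.antisymm (fun x hx => ?_) (image_subset_iff.2 fun y hy => ?_)
  · obtain ⟨y, hyx, hy⟩ := hA.exists_eq_zadeh hT (hα.trans_le hx)
    exact ⟨y, hx.trans_eq hy.symm, hyx⟩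
  · exact le_trans hy (le_zadeh hA.bddAbove_range T y)

protected lemma zadeh (hT : Continuous T) (hA : IsCompactFuzzy A) : IsCompactFuzzy (zadeh T A) :=
  ⟨zadeh_mem_Icc hA.1 T, fun α hα => hA.cut_zadeh hT hα ▸ (hA.2 α hα).image hT⟩

lemma cut_iterate_zadeh (hT : Continuous T) (hA : IsCompactFuzzy A) {α : ℝ} (hα : 0 < α)
    (n : ℕ) : cut ((zadeh T)^[n] A) α = T^[n] '' cut A α := by
  induction n generalizing A with
  | zero => simp
  | succ n ih =>
    rw [iterate_succ_apply, ih (hA.zadeh hT), hA.cut_zadeh hT hα, iterate_succ, image_comp]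

end IsCompactFuzzy

lemma coe_iterate_hyper [TopologicalSpace X] {T : X → X} (hT : Continuous T) (n : ℕ)
    (K : NonemptyCompacts X) : ((hyper T hT)^[n] K : Set X) = T^[n] '' K := by
  have hsemiconj : Semiconj ((↑) : NonemptyCompacts X → Set X) (hyper T hT) (image T) :=
    fun _ => rfl
  rw [hsemiconj.iterate_right n K, image_iterate_eq]

section MetricSpace

variable [MetricSpace X]

lemma eHd_image_self (f : X → X) (K : Set X) : eHd X (f '' K) K = hausdorffDist (f '' K) K := by
  refine if_pos ?_
  rcases K.eq_empty_or_nonempty with rfl | hK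
  · exact Or.inr ⟨image_empty f, rfl⟩
  · exact Or.inl ⟨hK.image f, hK⟩

lemma dinf_le {A B : X → ℝ} {r : ℝ} (h : ∀ α ∈ Ioc (0 : ℝ) 1, eHd X (cut A α) (cut B α) ≤ r) :
    dinf A B ≤ r := by
  refine csSup_le ⟨_, 1, right_mem_Ioc.2 one_pos, rfl⟩ ?_
  rintro _ ⟨α, hα, rfl⟩
  exact h α hα

lemma hausdorffDist_iterate_image_le {T : X → X} (hT : Continuous T) {n : ℕ} {r : ℝ} (hr : 0 ≤ r)
    (hdist : ∀ L : NonemptyCompacts X, dist ((hyper T hT)^[n] L) L ≤ r) {K : Set X}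
    (hK : IsCompact K) : hausdorffDist (T^[n] '' K) K ≤ r := by
  rcases K.eq_empty_or_nonempty with rfl | hne
  · rwa [hausdorffDist_empty]
  · have hdistK := hdist ⟨⟨K, hK⟩, hne⟩
    rwa [NonemptyCompacts.dist_eq, coe_iterate_hyper] at hdistK

theorem zadeh_uniformlyRigid_of_hyper_uniformlyRigid_general {T : X → X} (hT : Continuous T)
    (hr : UnifRigidM (hyper T hT)) : UnifRigidOn dinf (zadeh T) {A | IsCompactFuzzy A} := by
  intro ε hε
  obtain ⟨n, hn, hdist⟩ := hr (ε / 2) (half_pos hε)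
  refine ⟨n, hn, fun A (hA : IsCompactFuzzy A) => ?_⟩
  suffices dinf ((zadeh T)^[n] A) A ≤ ε / 2 from this.trans_lt (half_lt_self hε)
  refine dinf_le fun α hα => ?_
  calc eHd X (cut ((zadeh T)^[n] A) α) (cut A α)
      = hausdorffDist (T^[n] '' cut A α) (cut A α) := by
        rw [hA.cut_iterate_zadeh hT hα.1, eHd_image_self]
    _ ≤ ε / 2 :=
        hausdorffDist_iterate_image_le hT (half_pos hε).le (fun L => (hdist L).le) (hA.2 α hα.1)

end MetricSpace

/-- If `(K(X), T_K)` is uniformly rigid, then the Zadeh extension on `𝔽₀(X)` is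
uniformly rigid. -/
theorem zadeh_uniformlyRigid_of_hyper_uniformlyRigid {X : Type*} [MetricSpace X] [CompactSpace X] [Nontrivial X]
    (T : X → X) (hT : Continuous T) (hTs : Function.Surjective T)
    (hr : UnifRigidM (hyper T hT)) :
    UnifRigidOn dinf (zadeh T) (F0 X) :=
  (zadeh_uniformlyRigid_of_hyper_uniformlyRigid_general hT hr).mono fun _ hA => hA.1.isCompactFuzzy
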